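/- Let ψ : (0,∞) → ℝ be one of the functions ψ(x) = x², ψ(x) = x^p for some p < 0, or ψ(x) = −log x. Let n ≥ 1 be an integer, θ ∈ (0, π/2], and let K be a θ-capillary convex body in ℝ^{n+1} with capillary support function s and base Ω. Then s(ζ) − ⟨ζ, z⟩ > 0 for every ζ ∈ C_θ and every z in the interior of Ω relative to the hyperplane {x_{n+1} = 0}, and there exists a unique z in this relative interior of Ω such that ∫_{C_θ} ψ'(s(ζ) − ⟨ζ, z⟩) ζ_i dσ(ζ) = 0 for every i = 1,…,n. -/

import Mathlib

open MeasureTheory Real Set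
open scoped RealInnerProductSpace

noncomputable section

abbrev V (n : ℕ) := EuclideanSpace ℝ (Fin (n + 1))

/-- The vertical unit vector `E_{n+1}`. -/
def Etop (n : ℕ) : V n := EuclideanSpace.single (Fin.last n) 1

/-- The spherical cap `S^n_θ`. -/
def sphCap (n : ℕ) (θ : ℝ) : Set (V n) :=
  {u | ‖u‖ = 1 ∧ Real.cos θ ≤ u (Fin.last n)}

/-- The boundary circle `∂S^n_θ`. -/
def sphCapBdry (n : ℕ) (θ : ℝ) : Set (V n) :=
  {u | ‖u‖ = 1 ∧ u (Fin.last n) = Real.cos θ}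

/-- The capillary cap `C_θ`. -/
def capCap (n : ℕ) (θ : ℝ) : Set (V n) :=
  {ζ | 0 ≤ ζ (Fin.last n) ∧ ‖ζ + Real.cos θ • Etop n‖ = 1}

/-- The open cone over `S^n_θ`. -/
def coneCap (n : ℕ) (θ : ℝ) : Set (V n) :=
  {x | ∃ l : ℝ, 0 < l ∧ ∃ u ∈ sphCap n θ, x = l • u}

/-- `G` is a positively 1-homogeneous extension of `g : C_θ → ℝ` which is `C^m` on an
open neighborhood of the cone over `S^n_θ`. -/
def IsHomExt (n : ℕ) (θ : ℝ) (m : ℕ∞) (g G : V n → ℝ) : Prop :=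
  (∃ U : Set (V n), IsOpen U ∧ coneCap n θ ⊆ U ∧ ContDiffOn ℝ m G U) ∧
  (∀ l : ℝ, 0 < l → ∀ u ∈ sphCap n θ, G (l • u) = l * G u) ∧
  (∀ ζ ∈ capCap n θ, G (ζ + Real.cos θ • Etop n) = g ζ)

/-- The Hessian of `G` at `u` as a quadratic/bilinear form. -/
def hessQ (n : ℕ) (G : V n → ℝ) (u v w : V n) : ℝ :=
  fderiv ℝ (fderiv ℝ G) u v w

/-- The Hessian matrix `D²G(u)` in the standard coordinates. -/
def hessM (n : ℕ) (G : V n → ℝ) (u : V n) : Matrix (Fin (n + 1)) (Fin (n + 1)) ℝ :=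
  fun i j => fderiv ℝ (fderiv ℝ G) u (EuclideanSpace.single i 1) (EuclideanSpace.single j 1)

/-- `σ_j` of the eigenvalues of `D²G(u)` (via characteristic polynomial coefficients). -/
def sigmaElem (n : ℕ) (j : ℕ) (G : V n → ℝ) (u : V n) : ℝ :=
  (-1 : ℝ) ^ j * ((hessM n G u).charpoly.coeff (n + 1 - j))

/-- `τ[g] ≥ 0` : the Hessian of the extension is positive semidefinite on `S^n_θ`. -/
def TauNonneg (n : ℕ) (θ : ℝ) (G : V n → ℝ) : Prop :=
  ∀ u ∈ sphCap n θ, ∀ v : V n, 0 ≤ hessQ n G u v v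

/-- `τ[g] > 0`. -/
def TauPos (n : ℕ) (θ : ℝ) (G : V n → ℝ) : Prop :=
  TauNonneg n θ G ∧
  ∀ u ∈ sphCap n θ, ∀ v : V n, v ≠ 0 → ⟪v, u⟫ = 0 → 0 < hessQ n G u v v

/-- Capillary (Robin) boundary condition: `∂_{n+1}G = 0` on `∂S^n_θ`. -/
def IsCapillaryF (n : ℕ) (θ : ℝ) (G : V n → ℝ) : Prop :=
  ∀ u ∈ sphCapBdry n θ, fderiv ℝ G u (Etop n) = 0

/-- Reflection negating the horizontal coordinates. -/
def horizNeg (n : ℕ) (ζ : V n) : V n := (2 * ζ (Fin.last n)) • Etop n - ζ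

/-- Support function of a set. -/
def suppFn (n : ℕ) (K : Set (V n)) (u : V n) : ℝ := sSup ((fun y => ⟪u, y⟫) '' K)

/-- Relative interior (within the hyperplane `{x_{n+1}=0}`) of the base `K ∩ {x_{n+1}=0}`. -/
def relintBase (n : ℕ) (K : Set (V n)) : Set (V n) :=
  {x | x (Fin.last n) = 0 ∧ ∃ ε > 0, ∀ y : V n, y (Fin.last n) = 0 → ‖y - x‖ < ε → y ∈ K}

/-- A `θ`-capillary convex body. -/
def IsCapBody (n : ℕ) (θ : ℝ) (K : Set (V n)) : Prop :=
  IsCompact K ∧ Convex ℝ K ∧ (interior K).Nonempty ∧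
  (∀ x ∈ K, 0 ≤ x (Fin.last n)) ∧
  (∀ x ∈ K, 0 < x (Fin.last n) → ∀ u : V n, ‖u‖ = 1 → ⟪u, x⟫ = suppFn n K u →
    Real.cos θ ≤ u (Fin.last n)) ∧
  (∀ v : V n, ‖v‖ = 1 → v (Fin.last n) = 0 →
    suppFn n K (Real.sin θ • v + Real.cos θ • Etop n) = Real.sin θ * suppFn n K v) ∧
  (relintBase n K).Nonempty

/-- `ψ` is one of `x²`, `x^p (p<0)`, `-log x`. -/
def PsiOK (ψ : ℝ → ℝ) : Prop :=
  (ψ = fun x : ℝ => x ^ 2) ∨ (∃ p : ℝ, p < 0 ∧ ψ = fun x : ℝ => x ^ p) ∨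
    (ψ = fun x : ℝ => -Real.log x)

/-!
Write `f = ψ'`, which is continuous and strictly increasing on `(0, ∞)`. If `Ψ` is a primitive of
`f`, a zero of the moment `∫ f (s ζ - ⟨ζ, z⟩) ζ dσ` in the horizontal directions is a critical point
of the convex function `z ↦ ∫ Ψ (s ζ - ⟨ζ, z⟩) dσ`, and strict monotonicity of `f` yields
uniqueness. As `f` may be singular at `0`, it is first made constant on `(-∞, ε]`; the minimisers
over the compact base then satisfy variational inequalities that get stronger as `ε` decreases, so
one point `z` of the base satisfies all of them. Were `z` on the boundary of the base, there would
be an outward normal `v` of the base at `z` with `z - v` in its interior. Since outward normals of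
`K` off the base do not point downwards, `v` is normal to all of `K` at `z`, so that
`h_K (u + c v) ≤ h_K u + c ⟨v, z⟩` for `c ≥ 0`. Comparing the slack `s ζ - ⟨ζ, z⟩` at `ζ` and at its
mirror image in `vᗮ` then shows that the moment pairs negatively with `v` for all small `ε`, against
the variational inequality tested at `z - v`.
-/

open Filter Topology

/-! ### Convex sets and monotone functions -/

section ConvexSet

variable {E : Type*} [NormedAddCommGroup E] [InnerProductSpace ℝ E] {B : Set E} {z : E}

lemma exists_add_smul_mem_of_mem_interior (hz : z ∈ interior B) (w : E) :
    ∃ t : ℝ, 0 < t ∧ z + t • w ∈ interior B := by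
  have htendsto : Tendsto (fun t : ℝ => z + t • w) (𝓝[>] 0) (𝓝 z) :=
    (Continuous.tendsto' (by fun_prop) 0 z (by simp)).mono_left nhdsWithin_le_nhds
  have hmem := htendsto.eventually_mem (isOpen_interior.mem_nhds hz)
  obtain ⟨t, ht, ht0⟩ := (hmem.and self_mem_nhdsWithin).exists
  exact ⟨t, ht0, ht⟩

lemma inner_le_of_forall_mem_interior (hB : Convex ℝ B) (hne : (interior B).Nonempty) {v : E}
    {c : ℝ} (h : ∀ y ∈ interior B, ⟪v, y⟫ ≤ c) {y : E} (hy : y ∈ B) : ⟪v, y⟫ ≤ c := by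
  have hclosed : IsClosed {y : E | ⟪v, y⟫ ≤ c} := isClosed_le (by fun_prop) continuous_const
  refine closure_minimal (s := interior B) h hclosed ?_
  rw [hB.closure_interior_eq_closure_of_nonempty_interior hne]
  exact subset_closure hy

lemma convex_setOf_forall_inner_sub_le (B : Set E) (z : E) :
    Convex ℝ {x | ∀ y ∈ B, ⟪z - x, y⟫ ≤ ⟪z - x, z⟫} := by
  intro x hx x' hx' a b ha hb hab y hy
  have hcomb : z - (a • x + b • x') = a • (z - x) + b • (z - x') := by
    rw [smul_sub, smul_sub, sub_add_sub_comm, ← add_smul, hab, one_smul]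
  simp only [hcomb, inner_add_left, real_inner_smul_left]
  gcongr
  exacts [hx y hy, hx' y hy]

/-- Otherwise the interior could be separated from `z` minus the normal cone at `z`, and the
separating functional would itself be normal at `z`. -/
lemma exists_normal_sub_mem_interior [CompleteSpace E] (hB : Convex ℝ B)
    (hne : (interior B).Nonempty) (hz : z ∉ interior B) :
    ∃ v : E, v ≠ 0 ∧ z - v ∈ interior B ∧ ∀ y ∈ B, ⟪v, y⟫ ≤ ⟪v, z⟫ := by
  by_contra! hcon
  let T : Set E := {x | ∀ y ∈ B, ⟪z - x, y⟫ ≤ ⟪z - x, z⟫}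
  have hdisj : Disjoint (interior B) T := by
    refine disjoint_left.mpr fun x hx hxT => ?_
    obtain ⟨y, hy, hlt⟩ := hcon (z - x) (sub_ne_zero.mpr fun h => hz (h ▸ hx)) (by simpa using hx)
    exact (hxT y hy).not_gt hlt
  obtain ⟨f, u, hfB, hfT⟩ := geometric_hahn_banach_open hB.interior isOpen_interior
    (convex_setOf_forall_inner_sub_le B z) hdisj
  let w := (InnerProductSpace.toDual ℝ E).symm f
  have hw : ∀ y, ⟪w, y⟫ = f y := fun y => InnerProductSpace.toDual_symm_apply
  have hzT : z ∈ T := fun y _ => by simp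
  have hnormal : ∀ y ∈ B, ⟪w, y⟫ ≤ ⟪w, z⟫ := fun y =>
    inner_le_of_forall_mem_interior hB hne fun y' hy' => by
      rw [hw, hw]; exact (hfB y' hy').le.trans (hfT z hzT)
  have hray : ∀ c : ℝ, 0 ≤ c → u ≤ f z - c * ‖w‖ ^ 2 := fun c hc => by
    have hmem : z - c • w ∈ T := fun y hy => by
      simpa [real_inner_smul_left] using mul_le_mul_of_nonneg_left (hnormal y hy) hc
    simpa [← hw, inner_sub_right, real_inner_smul_right] using hfT _ hmem
  have hw0 : 0 < ‖w‖ ^ 2 := by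
    obtain ⟨y, hy⟩ := hne
    have hlt : ⟪w, y⟫ < ⟪w, z⟫ := by rw [hw, hw]; exact (hfB y hy).trans_le (hfT z hzT)
    have : w ≠ 0 := by rintro h; simp [h] at hlt
    positivity
  have hfz : 0 ≤ f z - u := sub_nonneg.mpr (hfT z hzT)
  have := hray ((f z - u + 1) / ‖w‖ ^ 2) (by positivity)
  rw [div_mul_cancel₀ _ hw0.ne'] at this
  linarith

end ConvexSet

section TruncBelow

variable {f : ℝ → ℝ} {δ ε : ℝ}

/-- The function `f` with its values on `(-∞, ε]` replaced by the constant `f ε`; it removes a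
singularity of `f` at the origin. -/
def truncBelow (f : ℝ → ℝ) (ε x : ℝ) : ℝ := f (max ε x)

lemma truncBelow_of_le {x : ℝ} (h : ε ≤ x) : truncBelow f ε x = f x := by
  rw [truncBelow, max_eq_right h]

lemma continuous_truncBelow (hf : ContinuousOn f (Ioi 0)) (hε : 0 < ε) :
    Continuous (truncBelow f ε) :=
  hf.comp_continuous (by fun_prop) fun _ => lt_max_of_lt_left hε

lemma monotone_truncBelow (hf : MonotoneOn f (Ioi 0)) (hε : 0 < ε) : Monotone (truncBelow f ε) :=
  fun _ _ h => hf (lt_max_of_lt_left hε) (lt_max_of_lt_left hε) (max_le_max_left ε h)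

lemma truncBelow_mul_sub_le (hf : MonotoneOn f (Ioi 0)) (hδ : 0 < δ) (hδε : δ ≤ ε) (a : ℝ) {b : ℝ}
    (hb : ε ≤ b) : truncBelow f ε a * (a - b) ≤ truncBelow f δ a * (a - b) := by
  rcases le_total ε a with ha | ha
  · rw [truncBelow_of_le ha, truncBelow_of_le (hδε.trans ha)]
  · refine mul_le_mul_of_nonpos_right ?_ (by linarith)
    exact hf (lt_max_of_lt_left hδ) (lt_max_of_lt_left (hδ.trans_le hδε)) (max_le_max_right a hδε)

end TruncBelow

lemma intervalIntegral_le_of_monotone {f : ℝ → ℝ} (hf : Monotone f) (a b : ℝ) :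
    ∫ x in a..b, f x ≤ (b - a) * f b := by
  rcases le_total a b with hab | hab
  · have := intervalIntegral.integral_mono_on (μ := volume) hab hf.intervalIntegrable
      intervalIntegrable_const (fun x hx => hf hx.2)
    simpa using this
  · have := intervalIntegral.integral_mono_on (μ := volume) hab
      intervalIntegrable_const hf.intervalIntegrable
      (fun x hx => hf hx.1)
    rw [intervalIntegral.integral_symm]
    simp only [intervalIntegral.integral_const, smul_eq_mul] at this
    linarith

/-! ### Moments of a family of slacks -/

section Moment

variable {X P : Type*} [NormedAddCommGroup P] [InnerProductSpace ℝ P]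

/-- The slack at `x` of the constraint `⟪ξ x, z⟫ ≤ h x` on the point `z`. -/
def slack (h : X → ℝ) (ξ : X → P) (z : P) (x : X) : ℝ := h x - ⟪ξ x, z⟫

/-- The first moment of `ξ` with respect to the density `f` of the slack at `z`. For continuous `f`
it is minus the gradient of `potential σ h ξ f` at `z`. -/
def moment [MeasurableSpace X] (σ : Measure X) (h : X → ℝ) (ξ : X → P) (f : ℝ → ℝ) (z : P) : P :=
  ∫ x, f (slack h ξ z x) • ξ x ∂σ

/-- The integral of a primitive of `f` along the slack at `z`; its critical points are the zeros of
`moment σ h ξ f`. -/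
def potential [MeasurableSpace X] (σ : Measure X) (h : X → ℝ) (ξ : X → P) (f : ℝ → ℝ) (z : P) :
    ℝ :=
  ∫ x, (∫ t in (0 : ℝ)..slack h ξ z x, f t) ∂σ

variable {h : X → ℝ} {ξ : X → P} {f : ℝ → ℝ}

lemma slack_sub_slack (y z : P) (x : X) : slack h ξ z x - slack h ξ y x = ⟪ξ x, y - z⟫ := by
  simp only [slack, inner_sub_right]; ring

lemma moment_truncBelow {ε : ℝ} {z : P} [MeasurableSpace X] {σ : Measure X}
    (hz : ∀ x, ε ≤ slack h ξ z x) :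
    moment σ h ξ (truncBelow f ε) z = moment σ h ξ f z := by
  simp only [moment, truncBelow_of_le (hz _)]

variable [TopologicalSpace X]

@[fun_prop]
lemma continuous_slack_uncurry (hh : Continuous h) (hξ : Continuous ξ) :
    Continuous fun p : P × X => slack h ξ p.1 p.2 := by
  unfold slack; fun_prop

lemma continuous_slack (hh : Continuous h) (hξ : Continuous ξ) (z : P) :
    Continuous (slack h ξ z) :=
  (continuous_slack_uncurry hh hξ).comp (Continuous.prodMk_right z)

variable [CompactSpace X]

lemma eventually_le_slack (hh : Continuous h) (hξ : Continuous ξ) {z : P}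
    (hz : ∀ x, 0 < slack h ξ z x) : ∀ᶠ ε in 𝓝[>] (0 : ℝ), ∀ x, ε ≤ slack h ξ z x := by
  cases isEmpty_or_nonempty X
  · exact Eventually.of_forall fun _ x => isEmptyElim x
  obtain ⟨x₀, -, hx₀⟩ := isCompact_univ.exists_isMinOn univ_nonempty
    (continuous_slack hh hξ z).continuousOn
  filter_upwards [Ioo_mem_nhdsGT (hz x₀)] with ε hε x
  exact hε.2.le.trans (hx₀ (mem_univ x))

variable [MeasurableSpace X] [BorelSpace X] {σ : Measure X} [IsFiniteMeasure σ]

lemma integrable_of_continuous {F : Type*} [NormedAddCommGroup F] {g : X → F} (hg : Continuous g) :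
    Integrable g σ :=
  hg.integrable_of_hasCompactSupport (HasCompactSupport.of_compactSpace g)

lemma integral_pos_of_continuous [σ.IsOpenPosMeasure] {g : X → ℝ} (hg : Continuous g)
    (hnonneg : ∀ x, 0 ≤ g x) {x₀ : X} (hx₀ : g x₀ ≠ 0) : 0 < ∫ x, g x ∂σ :=
  hg.integral_pos_of_hasCompactSupport_nonneg_nonzero (HasCompactSupport.of_compactSpace g)
    hnonneg hx₀

lemma continuous_integral_of_continuous {Y F : Type*} [TopologicalSpace Y]
    [FirstCountableTopology Y] [LocallyCompactSpace Y] [NormedAddCommGroup F] [NormedSpace ℝ F]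
    [SecondCountableTopologyEither X F] {g : Y → X → F}
    (hg : Continuous fun p : Y × X => g p.1 p.2) : Continuous fun y => ∫ x, g y x ∂σ := by
  simpa only [Measure.restrict_univ] using
    continuous_parametric_integral_of_continuous (μ := σ) (f := g) hg isCompact_univ

variable [FiniteDimensional ℝ P]

lemma inner_moment (hξ : Continuous ξ) {z : P} (hg : Continuous fun x => f (slack h ξ z x))
    (w : P) : ⟪moment σ h ξ f z, w⟫ = ∫ x, f (slack h ξ z x) * ⟪ξ x, w⟫ ∂σ := by
  have hint : Integrable (fun x => f (slack h ξ z x) • ξ x) σ :=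
    integrable_of_continuous (hg.smul hξ)
  rw [real_inner_comm, moment, ← integral_inner hint]
  simp only [real_inner_smul_right, real_inner_comm w]

lemma continuous_moment (hh : Continuous h) (hξ : Continuous ξ) (hf : Continuous f) :
    Continuous (moment σ h ξ f) :=
  continuous_integral_of_continuous (g := fun z x => f (slack h ξ z x) • ξ x) (by fun_prop)

lemma continuous_potential (hh : Continuous h) (hξ : Continuous ξ) (hf : Continuous f) :
    Continuous (potential σ h ξ f) := by
  have hprim : Continuous fun b : ℝ => ∫ t in (0 : ℝ)..b, f t :=
    intervalIntegral.continuous_primitive (fun _ _ => hf.intervalIntegrable _ _) 0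
  exact continuous_integral_of_continuous
    (g := fun z x => ∫ t in (0 : ℝ)..slack h ξ z x, f t)
    (hprim.comp (continuous_slack_uncurry hh hξ))

lemma potential_sub_le (hh : Continuous h) (hξ : Continuous ξ) (hf : Continuous f)
    (hmono : Monotone f) (w z : P) :
    potential σ h ξ f w - potential σ h ξ f z ≤ ⟪moment σ h ξ f w, z - w⟫ := by
  have hprim : Continuous fun b : ℝ => ∫ t in (0 : ℝ)..b, f t :=
    intervalIntegral.continuous_primitive (fun _ _ => hf.intervalIntegrable _ _) 0
  have hint : ∀ u : P, Integrable (fun x => ∫ t in (0 : ℝ)..slack h ξ u x, f t) σ := fun u =>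
    integrable_of_continuous (hprim.comp (continuous_slack hh hξ u))
  have hw := hf.comp (continuous_slack hh hξ w)
  unfold potential
  rw [← integral_sub (hint w) (hint z), inner_moment hξ hw]
  refine integral_mono ((hint w).sub (hint z)) (integrable_of_continuous ?_) fun x => ?_
  · exact hw.mul (by fun_prop)
  · simp only
    rw [intervalIntegral.integral_interval_sub_left (hf.intervalIntegrable _ _)
      (hf.intervalIntegrable _ _), ← slack_sub_slack, mul_comm]
    exact intervalIntegral_le_of_monotone hmono _ _

/-- The variational inequality holds at a minimiser over `B` of the integral of a primitive of `f`
along the slack: the gradient inequality for the convex potential is tested between `z` and the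
points `z + t • (y - z)` with `t → 0`. -/
lemma exists_forall_inner_moment_nonpos (hh : Continuous h) (hξ : Continuous ξ) (hf : Continuous f)
    (hmono : Monotone f) {B : Set P} (hB : IsCompact B) (hBc : Convex ℝ B) (hne : B.Nonempty) :
    ∃ z ∈ B, ∀ y ∈ B, ⟪moment σ h ξ f z, y - z⟫ ≤ 0 := by
  obtain ⟨z, hz, hmin⟩ := hB.exists_isMinOn hne
    (continuous_potential (σ := σ) hh hξ hf).continuousOn
  refine ⟨z, hz, fun y hy => ?_⟩
  let γ : ℝ → P := fun t => z + t • (y - z)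
  have hγ : ∀ t ∈ Ioo (0 : ℝ) 1, ⟪moment σ h ξ f (γ t), y - z⟫ ≤ 0 := fun t ht => by
    have hγB : γ t ∈ B := hBc.add_smul_sub_mem hz hy ⟨ht.1.le, ht.2.le⟩
    have hle : 0 ≤ ⟪moment σ h ξ f (γ t), z - γ t⟫ :=
      (sub_nonneg.mpr (hmin hγB)).trans
      (potential_sub_le (σ := σ) hh hξ hf hmono (γ t) z)
    have hdir : z - γ t = -(t • (y - z)) := by simp [γ]
    rw [hdir, inner_neg_right, real_inner_smul_right, neg_nonneg] at hle
    exact nonpos_of_mul_nonpos_right hle ht.1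
  have hlim : Tendsto (fun t => ⟪moment σ h ξ f (γ t), y - z⟫) (𝓝[>] 0)
      (𝓝 ⟪moment σ h ξ f z, y - z⟫) := by
    have hcont := continuous_moment (σ := σ) hh hξ hf
    exact (Continuous.tendsto' (by fun_prop) 0 _ (by simp [γ])).mono_left nhdsWithin_le_nhds
  exact le_of_tendsto hlim (eventually_of_mem (Ioo_mem_nhdsGT one_pos) hγ)

lemma inner_moment_truncBelow_le (hh : Continuous h) (hξ : Continuous ξ)
    (hf : ContinuousOn f (Ioi 0)) (hmono : MonotoneOn f (Ioi 0)) {δ ε : ℝ} (hδ : 0 < δ)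
    (hδε : δ ≤ ε) {y z : P} (hy : ∀ x, ε ≤ slack h ξ y x) :
    ⟪moment σ h ξ (truncBelow f ε) z, y - z⟫ ≤ ⟪moment σ h ξ (truncBelow f δ) z, y - z⟫ := by
  have hcont : ∀ {η : ℝ}, 0 < η → Continuous fun x => truncBelow f η (slack h ξ z x) := fun hη =>
    (continuous_truncBelow hf hη).comp (continuous_slack hh hξ z)
  have hε := hcont (hδ.trans_le hδε)
  have hδ' := hcont hδ
  rw [inner_moment hξ hε, inner_moment hξ hδ']
  refine integral_mono (integrable_of_continuous (by fun_prop))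
    (integrable_of_continuous (by fun_prop)) fun x => ?_
  simpa only [slack_sub_slack] using truncBelow_mul_sub_le hmono hδ hδε (slack h ξ z x) (hy x)

/-- The solution sets for the various `ε` are compact and decrease with `ε`, so they have a common
point. -/
lemma exists_forall_inner_moment_truncBelow_nonpos (hh : Continuous h) (hξ : Continuous ξ)
    (hf : ContinuousOn f (Ioi 0)) (hmono : MonotoneOn f (Ioi 0)) {B : Set P} (hB : IsCompact B)
    (hBc : Convex ℝ B) (hne : B.Nonempty) :
    ∃ z ∈ B, ∀ ε > 0, ∀ y ∈ B, (∀ x, ε ≤ slack h ξ y x) →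
      ⟪moment σ h ξ (truncBelow f ε) z, y - z⟫ ≤ 0 := by
  let A : Ioi (0 : ℝ) → Set P := fun ε => {z | z ∈ B ∧ ∀ y ∈ B, (∀ x, ε ≤ slack h ξ y x) →
    ⟪moment σ h ξ (truncBelow f ε) z, y - z⟫ ≤ 0}
  have hmono' : Monotone A := fun δ ε hδε z ⟨hz, hA⟩ => ⟨hz, fun y hy hs =>
    (inner_moment_truncBelow_le hh hξ hf hmono δ.2 hδε hs).trans
      (hA y hy fun x => (Subtype.coe_le_coe.mpr hδε).trans (hs x))⟩
  have hclosed : ∀ ε, IsClosed (A ε) := fun ε => by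
    have hm := continuous_moment (σ := σ) hh hξ (continuous_truncBelow hf ε.2)
    simp only [A, ofPred_and, ofPred_forall]
    refine hB.isClosed.inter (isClosed_iInter fun y => isClosed_iInter fun _ =>
      isClosed_iInter fun _ => isClosed_le (by fun_prop) continuous_const)
  have hnonempty : ∀ ε, (A ε).Nonempty := fun ε => by
    obtain ⟨z, hz, hvi⟩ := exists_forall_inner_moment_nonpos (σ := σ) hh hξ
      (continuous_truncBelow hf ε.2) (monotone_truncBelow hmono ε.2) hB hBc hne
    exact ⟨z, hz, fun y hy _ => hvi y hy⟩
  obtain ⟨z, hz⟩ := IsCompact.nonempty_iInter_of_directed_nonempty_isCompact_isClosed A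
    hmono'.directed_ge hnonempty
    (fun ε => hB.of_isClosed_subset (hclosed ε) fun _ hz => hz.1) hclosed
  rw [mem_iInter] at hz
  exact ⟨z, (hz ⟨1, mem_Ioi.mpr one_pos⟩).1, fun ε hε => (hz ⟨ε, hε⟩).2⟩

lemma moment_eq_zero_unique [σ.IsOpenPosMeasure] (hh : Continuous h) (hξ : Continuous ξ)
    (hf : ContinuousOn f (Ioi 0)) (hmono : StrictMonoOn f (Ioi 0))
    (hspan : ∀ w : P, (∀ x, ⟪ξ x, w⟫ = 0) → w = 0) {z w : P} (hz : ∀ x, 0 < slack h ξ z x)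
    (hw : ∀ x, 0 < slack h ξ w x) (hz0 : moment σ h ξ f z = 0) (hw0 : moment σ h ξ f w = 0) :
    z = w := by
  by_contra hzw
  obtain ⟨x₀, hx₀⟩ : ∃ x, ⟪ξ x, w - z⟫ ≠ 0 := by
    by_contra! hall
    exact hzw (sub_eq_zero.mp (hspan _ hall)).symm
  have hcont {u : P} (hu : ∀ x, 0 < slack h ξ u x) : Continuous fun x => f (slack h ξ u x) :=
    hf.comp_continuous (continuous_slack hh hξ u) hu
  have hcont' {u : P} (hu : ∀ x, 0 < slack h ξ u x) :
      Continuous fun x => f (slack h ξ u x) * ⟪ξ x, w - z⟫ :=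
    (hcont hu).mul (by fun_prop)
  have hsub (x : X) : f (slack h ξ z x) * ⟪ξ x, w - z⟫ - f (slack h ξ w x) * ⟪ξ x, w - z⟫ =
      (f (slack h ξ z x) - f (slack h ξ w x)) * (slack h ξ z x - slack h ξ w x) := by
    rw [slack_sub_slack, sub_mul]
  have hpos : 0 < ∫ x, (f (slack h ξ z x) * ⟪ξ x, w - z⟫ -
      f (slack h ξ w x) * ⟪ξ x, w - z⟫) ∂σ := by
    refine integral_pos_of_continuous (x₀ := x₀) ((hcont' hz).sub (hcont' hw)) (fun x => ?_) ?_
    · simpa only [hsub, id] using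
        (hmono.monotoneOn.monovaryOn monotoneOn_id).sub_mul_sub_nonneg (hw x) (hz x)
    · rw [← sub_mul]
      exact mul_ne_zero (sub_ne_zero.mpr fun heq => hx₀ (by
        rw [← slack_sub_slack, hmono.injOn (hz x₀) (hw x₀) heq, sub_self])) hx₀
  rw [integral_sub (integrable_of_continuous (hcont' hz)) (integrable_of_continuous (hcont' hw)),
    ← inner_moment hξ (hcont hz), ← inner_moment hξ (hcont hw), hz0, hw0, sub_self] at hpos
  exact hpos.false

theorem existsUnique_moment_eq_zero [σ.IsOpenPosMeasure] (hh : Continuous h) (hξ : Continuous ξ)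
    (hf : ContinuousOn f (Ioi 0)) (hmono : StrictMonoOn f (Ioi 0))
    (hspan : ∀ w : P, (∀ x, ⟪ξ x, w⟫ = 0) → w = 0) {B : Set P} (hB : IsCompact B)
    (hBc : Convex ℝ B) (hne : (interior B).Nonempty)
    (hpos : ∀ z ∈ interior B, ∀ x, 0 < slack h ξ z x)
    (hneg : ∀ z ∈ B, ∀ v, v ≠ 0 → z - v ∈ interior B → (∀ y ∈ B, ⟪v, y⟫ ≤ ⟪v, z⟫) →
      ∀ᶠ ε in 𝓝[>] 0, ⟪moment σ h ξ (truncBelow f ε) z, v⟫ < 0) :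
    ∃! z, z ∈ interior B ∧ moment σ h ξ f z = 0 := by
  obtain ⟨z, hz, hvi⟩ := exists_forall_inner_moment_truncBelow_nonpos (σ := σ) hh hξ hf
    hmono.monotoneOn hB hBc (hne.mono interior_subset)
  have hvi' : ∀ y ∈ interior B, ∀ᶠ ε in 𝓝[>] 0,
      ⟪moment σ h ξ (truncBelow f ε) z, y - z⟫ ≤ 0 := fun y hy => by
    filter_upwards [eventually_le_slack hh hξ (hpos y hy), self_mem_nhdsWithin] with ε hle hε
    exact hvi ε hε y (interior_subset hy) hle
  have hzi : z ∈ interior B := by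
    by_contra hzi
    obtain ⟨v, hv, hvz, hnormal⟩ := exists_normal_sub_mem_interior hBc hne hzi
    obtain ⟨ε, hlt, hle⟩ := ((hneg z hz v hv hvz hnormal).and (hvi' _ hvz)).exists
    rw [sub_sub_cancel_left, inner_neg_right] at hle
    linarith
  have hz0 : moment σ h ξ f z = 0 := by
    obtain ⟨t, ht, hy⟩ := exists_add_smul_mem_of_mem_interior hzi (moment σ h ξ f z)
    obtain ⟨ε, hle, hε⟩ := ((hvi' _ hy).and (eventually_le_slack hh hξ (hpos z hzi))).exists
    rw [moment_truncBelow hε, add_sub_cancel_left, real_inner_smul_right] at hle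
    exact real_inner_self_nonpos.mp (nonpos_of_mul_nonpos_right hle ht)
  exact ⟨z, ⟨hzi, hz0⟩, fun w ⟨hwi, hw0⟩ =>
    moment_eq_zero_unique hh hξ hf hmono hspan (hpos w hwi) (hpos z hzi) hw0 hz0⟩

lemma integral_mul_neg_of_involutive [σ.IsOpenPosMeasure] {τ : X ≃ₜ X}
    (hτ : MeasurePreserving τ σ σ) (hinv : Function.Involutive τ) {F l : X → ℝ} (hF : Continuous F)
    (hl : Continuous l) (hlτ : ∀ x, l (τ x) = -l x) (hle : ∀ x, 0 ≤ l x → F x ≤ F (τ x)) {x₀ : X}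
    (hx₀ : l x₀ ≠ 0) (hne : F x₀ ≠ F (τ x₀)) : ∫ x, F x * l x ∂σ < 0 := by
  have hint : ∀ {g : X → ℝ}, Continuous g → Integrable g σ := integrable_of_continuous
  have hreflect : ∫ x, F (τ x) * l x ∂σ = -∫ x, F x * l x ∂σ := by
    calc ∫ x, F (τ x) * l x ∂σ = ∫ x, F (τ (τ x)) * l (τ x) ∂σ :=
          (hτ.integral_comp τ.measurableEmbedding fun x => F (τ x) * l x).symm
      _ = -∫ x, F x * l x ∂σ := by simp only [hinv _, hlτ, mul_neg, integral_neg]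
  have hpos : 0 < ∫ x, (F (τ x) * l x - F x * l x) ∂σ := by
    refine integral_pos_of_continuous (x₀ := x₀) (by fun_prop) (fun x => ?_) ?_
    · rw [← sub_mul]
      rcases le_total 0 (l x) with hx | hx
      · exact mul_nonneg (sub_nonneg.mpr (hle x hx)) hx
      · have hτx := hle (τ x) (by rw [hlτ]; exact neg_nonneg.mpr hx)
        rw [hinv x] at hτx
        exact mul_nonneg_of_nonpos_of_nonpos (sub_nonpos.mpr hτx) hx
    · rw [← sub_mul]
      exact mul_ne_zero (sub_ne_zero.mpr hne.symm) hx₀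
  rw [integral_sub (hint (by fun_prop)) (hint (by fun_prop)), hreflect] at hpos
  linarith

end Moment

/-! ### Hausdorff measure -/

section Hausdorff

lemma integral_subtype_hausdorffMeasure {Y F : Type*} [EMetricSpace Y] [MeasurableSpace Y]
    [BorelSpace Y] [NormedAddCommGroup F] [NormedSpace ℝ F] {s : Set Y} (hs : MeasurableSet s)
    {d : ℝ} (hd : 0 ≤ d) (g : Y → F) : ∫ x : s, g x ∂μH[d] = ∫ y in s, g y ∂μH[d] := by
  rw [← (MeasurableEmbedding.subtype_coe hs).integral_map g,
    isometry_subtype_coe.map_hausdorffMeasure (Or.inl hd), Subtype.range_coe]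

variable {E : Type*} [NormedAddCommGroup E] [InnerProductSpace ℝ E]

lemma hemisphere_subset_image_stereoInvFunAux {v : E} (hv : ‖v‖ = 1) :
    {u : E | ‖u‖ = 1 ∧ ⟪v, u⟫ ≤ 0} ⊆
      stereoInvFunAux v '' ((↑) '' Metric.closedBall (0 : (ℝ ∙ v)ᗮ) 2) := by
  rintro u ⟨hu, hvu⟩
  have huv : u ≠ v := by
    rintro rfl
    rw [real_inner_self_eq_norm_sq, hu] at hvu
    norm_num at hvu
  refine ⟨_, ⟨stereoToFun v u, ?_, rfl⟩, congrArg Subtype.val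
    (stereo_left_inv hv (x := ⟨u, mem_sphere_zero_iff_norm.mpr hu⟩) huv)⟩
  have hden : 1 ≤ 1 - ⟪v, u⟫ := by linarith
  rw [mem_closedBall_zero_iff, stereoToFun_apply, innerSL_apply_apply, norm_smul,
    Real.norm_of_nonneg (by positivity)]
  calc 2 / (1 - ⟪v, u⟫) * ‖(ℝ ∙ v)ᗮ.orthogonalProjectionOnto u‖ ≤ 2 / 1 * 1 := by
        gcongr
        exact ((ℝ ∙ v)ᗮ.norm_orthogonalProjectionOnto_apply_le u).trans_eq hu
    _ = 2 := by norm_num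

variable [MeasurableSpace E] [BorelSpace E]

lemma hausdorffMeasure_pos_of_orthogonalProjectionOnto_image [FiniteDimensional ℝ E]
    (U : Submodule ℝ E) {s : Set E} (hs : (interior (U.orthogonalProjectionOnto '' s)).Nonempty) :
    0 < μH[Module.finrank ℝ U] s := by
  have hle := U.lipschitzWith_orthogonalProjectionOnto.hausdorffMeasure_image_le
    (Module.finrank ℝ U).cast_nonneg s
  rw [ENNReal.coe_one, ENNReal.one_rpow, one_mul] at hle
  exact (Measure.measure_pos_of_nonempty_interior _ hs).trans_le hle

variable {n : ℕ} [Fact (Module.finrank ℝ E = n + 1)]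

lemma hausdorffMeasure_hemisphere_lt_top {v : E} (hv : ‖v‖ = 1) :
    μH[n] {u : E | ‖u‖ = 1 ∧ ⟪v, u⟫ ≤ 0} < ⊤ := by
  have : FiniteDimensional ℝ E := .of_fact_finrank_eq_succ n
  have hdim : Module.finrank ℝ (ℝ ∙ v)ᗮ = n :=
    Submodule.finrank_orthogonal_span_singleton (norm_pos_iff.mp (by simp [hv]))
  let φ : (ℝ ∙ v)ᗮ → E := fun w => stereoInvFunAux v w
  have hφ : ContDiff ℝ 1 φ := contDiff_stereoInvFunAux.comp (ℝ ∙ v)ᗮ.subtypeL.contDiff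
  obtain ⟨C, hC⟩ := hφ.contDiffOn.exists_lipschitzOnWith one_ne_zero
    (convex_closedBall (0 : (ℝ ∙ v)ᗮ) 2) (isCompact_closedBall 0 2)
  have hball : μH[n] (Metric.closedBall (0 : (ℝ ∙ v)ᗮ) 2) < ⊤ := by
    rw [← hdim]
    exact (isCompact_closedBall _ _).measure_lt_top
  calc μH[n] {u : E | ‖u‖ = 1 ∧ ⟪v, u⟫ ≤ 0}
      ≤ μH[n] (φ '' Metric.closedBall 0 2) := by
        rw [← image_image]
        exact measure_mono (hemisphere_subset_image_stereoInvFunAux hv)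
    _ ≤ C ^ (n : ℝ) * μH[n] (Metric.closedBall (0 : (ℝ ∙ v)ᗮ) 2) :=
        hC.hausdorffMeasure_image_le n.cast_nonneg
    _ < ⊤ := ENNReal.mul_lt_top
        (ENNReal.rpow_lt_top_of_nonneg n.cast_nonneg ENNReal.coe_ne_top) hball

lemma hausdorffMeasure_unitSphere_lt_top : μH[n] (Metric.sphere (0 : E) 1) < ⊤ := by
  have : Nontrivial E := Module.nontrivial_of_finrank_eq_succ
    (Fact.out (p := Module.finrank ℝ E = n + 1))
  obtain ⟨v, hv⟩ := exists_norm_eq E zero_le_one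
  refine (measure_mono (t := {u : E | ‖u‖ = 1 ∧ ⟪v, u⟫ ≤ 0} ∪
    {u : E | ‖u‖ = 1 ∧ ⟪-v, u⟫ ≤ 0}) fun u hu => ?_).trans_lt (measure_union_lt_top
      (hausdorffMeasure_hemisphere_lt_top hv)
      (hausdorffMeasure_hemisphere_lt_top ((norm_neg v).trans hv)))
  rw [mem_sphere_zero_iff_norm] at hu
  rcases le_total ⟪v, u⟫ 0 with h | h
  · exact Or.inl ⟨hu, h⟩
  · exact Or.inr ⟨hu, by rwa [inner_neg_left, neg_nonpos]⟩

end Hausdorff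

/-! ### The capillary cap -/

section Cap

variable {n : ℕ} {θ : ℝ}

lemma inner_Etop (x : V n) : ⟪x, Etop n⟫ = x (Fin.last n) := by
  simp [Etop, EuclideanSpace.inner_single_right]

lemma Etop_last : Etop n (Fin.last n) = 1 := by simp [Etop]

lemma norm_Etop : ‖Etop n‖ = 1 := by simp [Etop]

/-- The hyperplane `{x_{n+1} = 0}` as a linear subspace. -/
def horizontal (n : ℕ) : Submodule ℝ (V n) := (ℝ ∙ Etop n)ᗮ

lemma mem_horizontal {x : V n} : x ∈ horizontal n ↔ x (Fin.last n) = 0 := by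
  rw [horizontal, Submodule.mem_orthogonal_singleton_iff_inner_left, inner_Etop]

lemma finrank_horizontal : Module.finrank ℝ (horizontal n) = n := by
  have : Fact (Module.finrank ℝ (V n) = n + 1) := ⟨by simp⟩
  exact Submodule.finrank_orthogonal_span_singleton (norm_pos_iff.mp (by simp [norm_Etop]))

lemma inner_add_smul_Etop (ζ : V n) (c : ℝ) (z : horizontal n) :
    ⟪ζ + c • Etop n, (z : V n)⟫ = ⟪ζ, (z : V n)⟫ := by
  rw [inner_add_left, real_inner_smul_left, real_inner_comm (z : V n) (Etop n), inner_Etop,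
    mem_horizontal.mp z.2, mul_zero, add_zero]

/-- The orthogonal projection onto the hyperplane `{x_{n+1} = 0}`. -/
abbrev horizProj (n : ℕ) : V n →L[ℝ] horizontal n := (horizontal n).orthogonalProjectionOnto

lemma horizProj_add_smul_Etop (x : horizontal n) (t : ℝ) : horizProj n (x + t • Etop n) = x := by
  have hE : horizProj n (Etop n) = 0 :=
    Submodule.orthogonalProjectionOnto_orthogonalComplement_singleton_eq_zero _
  rw [map_add, map_smul, hE, smul_zero, add_zero,
    Submodule.orthogonalProjectionOnto_mem_subspace_eq_self]

lemma horizProj_add_last_smul_Etop (ζ : V n) :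
    (horizProj n ζ : V n) + ζ (Fin.last n) • Etop n = ζ := by
  have hmem : ζ - ζ (Fin.last n) • Etop n ∈ horizontal n := by
    simp [mem_horizontal, Etop_last]
  have hproj := horizProj_add_smul_Etop ⟨_, hmem⟩ (ζ (Fin.last n))
  rw [sub_add_cancel] at hproj
  rw [hproj, sub_add_cancel]

lemma horizProj_apply_of_ne_last (ζ : V n) {i : Fin (n + 1)} (hi : i ≠ Fin.last n) :
    (horizProj n ζ : V n) i = ζ i := by
  conv_rhs => rw [← horizProj_add_last_smul_Etop ζ]
  simp [Etop, hi]

lemma inner_horizProj (ζ : V n) (z : horizontal n) : ⟪horizProj n ζ, z⟫ = ⟪ζ, (z : V n)⟫ :=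
  Submodule.inner_orthogonalProjectionOnto_eq_of_mem_right z ζ

lemma norm_add_smul_Etop_sq (x : horizontal n) (t : ℝ) :
    ‖(x : V n) + t • Etop n‖ ^ 2 = ‖x‖ ^ 2 + t ^ 2 := by
  have horth : ⟪(x : V n), Etop n⟫ = 0 := (inner_Etop _).trans (mem_horizontal.mp x.2)
  rw [norm_add_sq_real, real_inner_smul_right, horth, norm_smul, norm_Etop]
  simp

lemma add_smul_Etop_mem_capCap_iff (x : horizontal n) (t : ℝ) :
    (x : V n) + t • Etop n ∈ capCap n θ ↔ 0 ≤ t ∧ ‖x‖ ^ 2 + (t + cos θ) ^ 2 = 1 := by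
  rw [capCap, mem_ofPred_eq, add_assoc, ← add_smul, ← norm_add_smul_Etop_sq,
    pow_eq_one_iff_of_nonneg (norm_nonneg _) two_ne_zero]
  simp [mem_horizontal.mp x.2, Etop_last]

lemma mem_capCap_iff {ζ : V n} : ζ ∈ capCap n θ ↔
    0 ≤ ζ (Fin.last n) ∧ ‖horizProj n ζ‖ ^ 2 + (ζ (Fin.last n) + cos θ) ^ 2 = 1 := by
  rw [← add_smul_Etop_mem_capCap_iff, horizProj_add_last_smul_Etop]

lemma isCompact_capCap : IsCompact (capCap n θ) := by
  have hclosed : IsClosed (capCap n θ) :=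
    (isClosed_le (g := fun ζ : V n => ζ (Fin.last n)) continuous_const (by fun_prop)).inter
      (isClosed_eq (f := fun ζ : V n => ‖ζ + cos θ • Etop n‖) (by fun_prop) continuous_const)
  refine (isCompact_closedBall (-(cos θ • Etop n)) 1).of_isClosed_subset hclosed fun ζ hζ => ?_
  rw [mem_closedBall_iff_norm, sub_neg_eq_add, hζ.2]

instance : CompactSpace (capCap n θ) := isCompact_iff_compactSpace.mp isCompact_capCap

instance : IsFiniteMeasure (μH[(n : ℝ)] : Measure (capCap n θ)) := by
  have : Fact (Module.finrank ℝ (V n) = n + 1) := ⟨by simp⟩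
  let φ : capCap n θ → V n := fun ζ => ζ + cos θ • Etop n
  have hφ : Isometry φ := (isometry_add_right (cos θ • Etop n)).comp isometry_subtype_coe
  refine ⟨?_⟩
  rw [← hφ.hausdorffMeasure_image (Or.inl n.cast_nonneg)]
  refine (measure_mono ?_).trans_lt (hausdorffMeasure_unitSphere_lt_top (E := V n))
  rintro _ ⟨ζ, -, rfl⟩
  exact mem_sphere_zero_iff_norm.mpr ζ.2.2

/-- The parametrisation of the cap `C_θ` as a graph over the ball of radius `sin θ`. -/
def capGraph (n : ℕ) (θ : ℝ) (x : horizontal n) : V n := x + (√(1 - ‖x‖ ^ 2) - cos θ) • Etop n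

lemma continuous_capGraph : Continuous (capGraph n θ) := by
  unfold capGraph; fun_prop

lemma capGraph_mem_capCap {x : horizontal n} (hx : ‖x‖ ≤ sin θ) : capGraph n θ x ∈ capCap n θ := by
  have hsq : cos θ ^ 2 ≤ 1 - ‖x‖ ^ 2 := by nlinarith [sin_sq_add_cos_sq θ, norm_nonneg x]
  rw [capGraph, add_smul_Etop_mem_capCap_iff, sub_nonneg, sub_add_cancel,
    sq_sqrt ((sq_nonneg _).trans hsq)]
  exact ⟨le_sqrt_of_sq_le hsq, by ring⟩

lemma coe_mem_capCap {x : horizontal n} (hx : ‖x‖ = sin θ) : (x : V n) ∈ capCap n θ := by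
  rw [← add_zero (x : V n), ← zero_smul ℝ (Etop n), add_smul_Etop_mem_capCap_iff, hx, zero_add]
  exact ⟨le_rfl, sin_sq_add_cos_sq θ⟩

lemma reflection_mem_capCap (v : horizontal n) {ζ : V n} (hζ : ζ ∈ capCap n θ) :
    (ℝ ∙ (v : V n))ᗮ.reflection ζ ∈ capCap n θ := by
  have hE : (ℝ ∙ (v : V n))ᗮ.reflection (Etop n) = Etop n := by
    refine Submodule.reflection_mem_subspace_eq_self ?_
    rw [Submodule.mem_orthogonal_singleton_iff_inner_right, inner_Etop, mem_horizontal.mp v.2]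
  constructor
  · rw [← inner_Etop, ← hE, LinearIsometryEquiv.inner_map_map, inner_Etop]
    exact hζ.1
  · calc ‖(ℝ ∙ (v : V n))ᗮ.reflection ζ + cos θ • Etop n‖
        = ‖(ℝ ∙ (v : V n))ᗮ.reflection (ζ + cos θ • Etop n)‖ := by rw [map_add, map_smul, hE]
      _ = 1 := (LinearIsometryEquiv.norm_map _ _).trans hζ.2

/-- The reflection of the cap in the hyperplane `vᗮ`. -/
def capMirror (v : horizontal n) : capCap n θ ≃ᵢ capCap n θ :=
  .mk' (fun ζ => ⟨_, reflection_mem_capCap v ζ.2⟩) (fun ζ => ⟨_, reflection_mem_capCap v ζ.2⟩)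
    (fun ζ => Subtype.ext (Submodule.reflection_reflection _ (ζ : V n)))
    (Isometry.of_dist_eq fun ζ η => (ℝ ∙ (v : V n))ᗮ.reflection.dist_map (ζ : V n) η)

lemma coe_capMirror (v : horizontal n) (ζ : capCap n θ) :
    (capMirror v ζ : V n) = (ℝ ∙ (v : V n))ᗮ.reflection ζ := rfl

lemma capMirror_involutive (v : horizontal n) :
    Function.Involutive (capMirror v : capCap n θ → capCap n θ) := fun ζ =>
  Subtype.ext (Submodule.reflection_reflection _ (ζ : V n))

lemma inner_horizProj_capMirror (v : horizontal n) (ζ : capCap n θ) :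
    ⟪horizProj n (capMirror v ζ), v⟫ = -⟪horizProj n ζ, v⟫ := by
  rw [inner_horizProj, inner_horizProj, coe_capMirror,
    ← (ℝ ∙ (v : V n))ᗮ.reflection.inner_map_map, Submodule.reflection_reflection,
    Submodule.reflection_orthogonalComplement_singleton_eq_neg, inner_neg_right]

variable (hθ : θ ∈ Ioc 0 (π / 2))
include hθ

lemma cos_nonneg_of_mem_Ioc : 0 ≤ cos θ :=
  cos_nonneg_of_neg_pi_div_two_le_of_le (by linarith [hθ.1, pi_pos]) hθ.2

lemma sin_pos_of_mem_Ioc : 0 < sin θ := sin_pos_of_pos_of_lt_pi hθ.1 (by linarith [hθ.2, pi_pos])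

lemma exists_norm_smul_eq_sin {v : horizontal n} (hv : v ≠ 0) :
    ∃ a : ℝ, 0 < a ∧ ‖a • v‖ = sin θ := by
  have hsin := sin_pos_of_mem_Ioc hθ
  have hnorm : 0 < ‖v‖ := norm_pos_iff.mpr hv
  exact ⟨sin θ / ‖v‖, by positivity, by
    rw [norm_smul, Real.norm_of_nonneg (by positivity), div_mul_cancel₀ _ hnorm.ne']⟩

lemma eq_zero_of_forall_inner_horizProj_eq_zero {w : horizontal n}
    (hw : ∀ ζ : capCap n θ, ⟪horizProj n ζ, w⟫ = 0) : w = 0 := by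
  by_contra hne
  obtain ⟨a, ha, hnorm⟩ := exists_norm_smul_eq_sin hθ hne
  have hinner := hw ⟨_, coe_mem_capCap hnorm⟩
  rw [inner_horizProj, Submodule.coe_smul, real_inner_smul_left] at hinner
  exact (mul_pos ha (real_inner_self_pos.mpr hne)).ne' hinner

lemma capGraph_horizProj {ζ : V n} (hζ : ζ ∈ capCap n θ) : capGraph n θ (horizProj n ζ) = ζ := by
  obtain ⟨h0, h1⟩ := mem_capCap_iff.mp hζ
  have hnonneg : 0 ≤ ζ (Fin.last n) + cos θ := add_nonneg h0 (cos_nonneg_of_mem_Ioc hθ)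
  rw [capGraph, ← h1, add_sub_cancel_left, sqrt_sq hnonneg, add_sub_cancel_right,
    horizProj_add_last_smul_Etop]

lemma norm_horizProj_le_sin {ζ : V n} (hζ : ζ ∈ capCap n θ) : ‖horizProj n ζ‖ ≤ sin θ := by
  obtain ⟨h0, h1⟩ := mem_capCap_iff.mp hζ
  have hcos := cos_nonneg_of_mem_Ioc hθ
  refine abs_le_of_sq_le_sq' ?_ (sin_pos_of_mem_Ioc hθ).le |>.2
  nlinarith [sin_sq_add_cos_sq θ]

lemma isOpenPosMeasure_capCap : (μH[(n : ℝ)] : Measure (capCap n θ)).IsOpenPosMeasure := by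
  refine ⟨fun U hU hne => ?_⟩
  obtain ⟨W, hW, rfl⟩ := isOpen_induced_iff.mp hU
  obtain ⟨ζ, hζ⟩ := hne
  have hball : Metric.ball (0 : horizontal n) (sin θ) ∩ capGraph n θ ⁻¹' W ⊆
      horizProj n '' (W ∩ capCap n θ) := by
    rintro x ⟨hx, hxW⟩
    refine ⟨capGraph n θ x, ⟨hxW, capGraph_mem_capCap (mem_ball_zero_iff.mp hx).le⟩, ?_⟩
    exact horizProj_add_smul_Etop x _
  have hclosure : horizProj n ζ ∈ closure (Metric.ball (0 : horizontal n) (sin θ)) := by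
    rw [closure_ball _ (sin_pos_of_mem_Ioc hθ).ne', mem_closedBall_zero_iff]
    exact norm_horizProj_le_sin hθ ζ.2
  have hopen : IsOpen (capGraph n θ ⁻¹' W) := hW.preimage continuous_capGraph
  have hmem : horizProj n ζ ∈ capGraph n θ ⁻¹' W := by
    rwa [mem_preimage, capGraph_horizProj hθ ζ.2]
  have hnonempty : (interior (horizProj n '' (W ∩ capCap n θ))).Nonempty := by
    refine Nonempty.mono (interior_maximal hball (Metric.isOpen_ball.inter hopen)) ?_
    rw [inter_comm]
    exact mem_closure_iff.mp hclosure _ hopen hmem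
  rw [← isometry_subtype_coe.hausdorffMeasure_image (Or.inl n.cast_nonneg),
    Subtype.image_preimage_coe, inter_comm]
  have hpos := hausdorffMeasure_pos_of_orthogonalProjectionOnto_image _ hnonempty
  rw [finrank_horizontal] at hpos
  exact hpos.ne'

end Cap

/-! ### Capillary bodies -/

section Body

variable {n : ℕ} {θ : ℝ} {K : Set (V n)}

lemma inner_le_suppFn (hK : IsCompact K) (u : V n) {x : V n} (hx : x ∈ K) :
    ⟪u, x⟫ ≤ suppFn n K u :=
  le_csSup (hK.image (by fun_prop)).bddAbove (mem_image_of_mem _ hx)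

lemma suppFn_eq_of_isMaxOn {u x : V n} (hx : x ∈ K) (hmax : ∀ y ∈ K, ⟪u, y⟫ ≤ ⟪u, x⟫) :
    suppFn n K u = ⟪u, x⟫ :=
  IsGreatest.csSup_eq ⟨mem_image_of_mem _ hx, forall_mem_image.mpr hmax⟩

lemma suppFn_add_smul_le (hK : IsCompact K) (hne : K.Nonempty) {v : V n} {m : ℝ}
    (hv : ∀ y ∈ K, ⟪v, y⟫ ≤ m) (u : V n) {c : ℝ} (hc : 0 ≤ c) :
    suppFn n K (u + c • v) ≤ suppFn n K u + c * m := by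
  refine csSup_le (hne.image _) (forall_mem_image.mpr fun y hy => ?_)
  rw [inner_add_left, real_inner_smul_left]
  gcongr
  exacts [inner_le_suppFn hK u hy, hv y hy]

lemma continuous_suppFn (hK : IsCompact K) : Continuous (suppFn n K) :=
  hK.continuous_sSup (f := fun u y => ⟪u, y⟫) (by fun_prop)

/-- The base `Ω` of `K`, as a subset of the hyperplane `{x_{n+1} = 0}`. -/
def capBase (K : Set (V n)) : Set (horizontal n) := (↑) ⁻¹' K

lemma isCompact_capBase (hK : IsCompact K) : IsCompact (capBase K) :=
  (horizontal n).closed_of_finiteDimensional.isClosedEmbedding_subtypeVal.isCompact_preimage hK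

lemma convex_capBase (hK : Convex ℝ K) : Convex ℝ (capBase K) :=
  hK.linear_preimage (horizontal n).subtype

lemma mem_interior_capBase_iff {z : horizontal n} :
    z ∈ interior (capBase K) ↔ (z : V n) ∈ relintBase n K := by
  rw [mem_interior_iff_mem_nhds, Metric.mem_nhds_iff]
  constructor
  · rintro ⟨ε, hε, hball⟩
    refine ⟨mem_horizontal.mp z.2, ε, hε, fun y hy hyz => ?_⟩
    exact @hball ⟨y, mem_horizontal.mpr hy⟩ (mem_ball_iff_norm.mpr hyz)
  · rintro ⟨-, ε, hε, hball⟩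
    refine ⟨ε, hε, fun y hy => hball y (mem_horizontal.mp y.2) ?_⟩
    exact mem_ball_iff_norm.mp hy

lemma nonempty_interior_capBase (hne : (relintBase n K).Nonempty) :
    (interior (capBase K)).Nonempty := by
  obtain ⟨z, hz⟩ := hne
  exact ⟨⟨z, mem_horizontal.mpr hz.1⟩, mem_interior_capBase_iff.mpr hz⟩

lemma IsCapBody.cos_mul_norm_le (hK : IsCapBody n θ K) {w x : V n} (hx : x ∈ K)
    (hx0 : 0 < x (Fin.last n)) (hmax : ∀ y ∈ K, ⟪w, y⟫ ≤ ⟪w, x⟫) :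
    cos θ * ‖w‖ ≤ w (Fin.last n) := by
  rcases eq_or_ne w 0 with rfl | hw
  · simp
  have hnorm : 0 < ‖w‖ := norm_pos_iff.mpr hw
  obtain ⟨-, -, -, -, hangle, -, -⟩ := hK
  have hle := hangle x hx hx0 (‖w‖⁻¹ • w) (norm_smul_inv_norm hw) <| by
    refine (suppFn_eq_of_isMaxOn hx fun y hy => ?_).symm
    rw [real_inner_smul_left, real_inner_smul_left]
    gcongr
    exact hmax y hy
  rwa [PiLp.smul_apply, smul_eq_mul, le_inv_mul_iff₀ hnorm, mul_comm] at hle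

lemma IsCapBody.exists_height_pos (hK : IsCapBody n θ K) : ∃ x ∈ K, 0 < x (Fin.last n) := by
  obtain ⟨-, -, ⟨x, hx⟩, hheight, -⟩ := hK
  obtain ⟨t, ht, hmem⟩ := exists_add_smul_mem_of_mem_interior hx (Etop n)
  refine ⟨_, interior_subset hmem, ?_⟩
  have := hheight x (interior_subset hx)
  simp only [PiLp.add_apply, PiLp.smul_apply, Etop_last, smul_eq_mul, mul_one]
  linarith

/-- Tilting `v` slightly downwards forces the maximum over `K` to be attained on the base, since
the outward normals at the other points of `K` do not point downwards. -/
lemma IsCapBody.inner_le_of_forall_mem_capBase (hθ : θ ∈ Ioc 0 (π / 2)) (hK : IsCapBody n θ K)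
    {v : horizontal n} {m : ℝ} (hv : ∀ y ∈ capBase K, ⟪v, y⟫ ≤ m) {x : V n} (hx : x ∈ K) :
    ⟪(v : V n), x⟫ ≤ m := by
  have htilt : ∀ ε : ℝ, 0 < ε → ⟪(v : V n) - ε • Etop n, x⟫ ≤ m := fun ε hε => by
    obtain ⟨y, hy, hmax⟩ := hK.1.exists_isMaxOn ⟨x, hx⟩
      (f := fun y => ⟪(v : V n) - ε • Etop n, y⟫) (by fun_prop)
    have hy0 : y (Fin.last n) = 0 := by
      by_contra hne
      have hangle := hK.cos_mul_norm_le hy ((hK.2.2.2.1 y hy).lt_of_ne' hne) hmax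
      have hlast : ((v : V n) - ε • Etop n) (Fin.last n) = -ε := by
        simp [mem_horizontal.mp v.2, Etop_last]
      have := mul_nonneg (cos_nonneg_of_mem_Ioc hθ) (norm_nonneg ((v : V n) - ε • Etop n))
      linarith
    calc ⟪(v : V n) - ε • Etop n, x⟫ ≤ ⟪(v : V n) - ε • Etop n, y⟫ := hmax hx
      _ = ⟪(v : V n), y⟫ := by
        rw [sub_eq_add_neg, ← neg_smul]
        exact inner_add_smul_Etop _ _ ⟨y, mem_horizontal.mpr hy0⟩
      _ ≤ m := hv ⟨y, mem_horizontal.mpr hy0⟩ hy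
  have hlim : Tendsto (fun ε : ℝ => ⟪(v : V n) - ε • Etop n, x⟫) (𝓝[>] 0) (𝓝 ⟪(v : V n), x⟫) :=
    (Continuous.tendsto' (by fun_prop) 0 _ (by simp)).mono_left nhdsWithin_le_nhds
  exact le_of_tendsto hlim (eventually_mem_nhdsWithin.mono htilt)

/-- The slack `s(ζ) - ⟨ζ, z⟩` of the capillary support function `s` of `K`. -/
def capSlack (θ : ℝ) (K : Set (V n)) : horizontal n → capCap n θ → ℝ :=
  slack (fun ζ => suppFn n K (ζ + cos θ • Etop n)) fun ζ => horizProj n ζ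

lemma capSlack_eq (z : horizontal n) (ζ : capCap n θ) :
    capSlack θ K z ζ = suppFn n K (ζ + cos θ • Etop n) - ⟪(ζ : V n), (z : V n)⟫ := by
  rw [capSlack, slack, inner_horizProj]

lemma continuous_capSupp (hK : IsCompact K) :
    Continuous fun ζ : capCap n θ => suppFn n K (ζ + cos θ • Etop n) :=
  (continuous_suppFn hK).comp (by fun_prop)

lemma inner_sub_le_capSlack (hK : IsCompact K) {y : V n} (hy : y ∈ K) (z : horizontal n)
    (ζ : capCap n θ) : ⟪(ζ : V n) + cos θ • Etop n, y - z⟫ ≤ capSlack θ K z ζ := by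
  rw [capSlack_eq, inner_sub_right, inner_add_smul_Etop]
  exact sub_le_sub_right (inner_le_suppFn hK _ hy) _

lemma IsCapBody.capSlack_pos (hθ : θ ∈ Ioc 0 (π / 2)) (hK : IsCapBody n θ K) {z : horizontal n}
    (hz : z ∈ interior (capBase K)) (ζ : capCap n θ) : 0 < capSlack θ K z ζ := by
  by_cases hproj : horizProj n ζ = 0
  · obtain ⟨x, hx, hx0⟩ := hK.exists_height_pos
    refine lt_of_lt_of_le ?_ (inner_sub_le_capSlack hK.1 hx z ζ)
    obtain ⟨h0, h1⟩ := mem_capCap_iff.mp ζ.2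
    have hsum : 0 < (ζ : V n) (Fin.last n) + cos θ := by
      refine (add_nonneg h0 (cos_nonneg_of_mem_Ioc hθ)).lt_of_ne' fun h => ?_
      simp [hproj, h] at h1
    have hζ : (ζ : V n) = (ζ : V n) (Fin.last n) • Etop n := by
      conv_lhs => rw [← horizProj_add_last_smul_Etop (ζ : V n), hproj]
      simp
    rw [hζ, ← add_smul, real_inner_smul_left, real_inner_comm, inner_Etop, PiLp.sub_apply,
      mem_horizontal.mp z.2, sub_zero]
    exact mul_pos hsum hx0
  · obtain ⟨t, ht, hmem⟩ := exists_add_smul_mem_of_mem_interior hz (horizProj n ζ)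
    refine lt_of_lt_of_le ?_
      (inner_sub_le_capSlack (y := (z + t • horizProj n ζ : horizontal n)) hK.1
        (interior_subset (s := capBase K) hmem) z ζ)
    rw [← Submodule.coe_sub, add_sub_cancel_left, inner_add_smul_Etop, Submodule.coe_smul,
      real_inner_smul_right, ← inner_horizProj]
    exact mul_pos ht (real_inner_self_pos.mpr hproj)

lemma capSlack_le_capMirror (hK : IsCompact K) (hne : K.Nonempty) {v z : horizontal n}
    (hv : ∀ y ∈ K, ⟪(v : V n), y⟫ ≤ ⟪(v : V n), z⟫) {ζ : capCap n θ} (hζ : 0 ≤ ⟪horizProj n ζ, v⟫) :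
    capSlack θ K z ζ ≤ capSlack θ K z (capMirror v ζ) := by
  rw [inner_horizProj] at hζ
  obtain ⟨c, hc, hmirror⟩ : ∃ c : ℝ, 0 ≤ c ∧ (ζ : V n) = capMirror v ζ + c • (v : V n) := by
    refine ⟨2 * (⟪(v : V n), (ζ : V n)⟫ / ‖(v : V n)‖ ^ 2), ?_, ?_⟩
    · rw [real_inner_comm]; positivity
    · rw [coe_capMirror, Submodule.reflection_orthogonal_apply,
        Submodule.reflection_singleton_apply]
      simp only [RCLike.ofReal_real_eq_id, id]
      module
  have hle := suppFn_add_smul_le hK hne hv ((capMirror v ζ : V n) + cos θ • Etop n) hc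
  rw [add_right_comm, ← hmirror] at hle
  have hinner : ⟪(ζ : V n), (z : V n)⟫ =
      ⟪(capMirror v ζ : V n), (z : V n)⟫ + c * ⟪(v : V n), z⟫ := by
    conv_lhs => rw [hmirror]
    rw [inner_add_left, real_inner_smul_left]
  rw [capSlack_eq, capSlack_eq, hinner]
  linarith

lemma IsCapBody.capSlack_coe_eq_zero (hθ : θ ∈ Ioc 0 (π / 2)) (hK : IsCapBody n θ K)
    {u z : horizontal n} (hu : ‖u‖ = sin θ) (hz : z ∈ capBase K)
    (hmax : ∀ y ∈ K, ⟪(u : V n), y⟫ ≤ ⟪(u : V n), z⟫) :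
    capSlack θ K z ⟨u, coe_mem_capCap hu⟩ = 0 := by
  have hsin := sin_pos_of_mem_Ioc hθ
  let e : V n := (sin θ)⁻¹ • (u : V n)
  have hinner : ∀ y, ⟪e, y⟫ = (sin θ)⁻¹ * ⟪(u : V n), y⟫ := fun y => real_inner_smul_left _ _ _
  have hnorm : ‖e‖ = 1 := by
    rw [norm_smul, ← Submodule.coe_norm, hu, norm_inv, Real.norm_of_nonneg hsin.le,
      inv_mul_cancel₀ hsin.ne']
  have hlast : e (Fin.last n) = 0 :=
    mem_horizontal.mp ((horizontal n).smul_mem _ u.2)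
  have hsupp : suppFn n K e = ⟪e, (z : V n)⟫ :=
    suppFn_eq_of_isMaxOn hz fun y hy => by rw [hinner, hinner]; gcongr; exact hmax y hy
  have hcap := hK.2.2.2.2.2.1 e hnorm hlast
  rw [hsupp, hinner, mul_inv_cancel_left₀ hsin.ne', smul_inv_smul₀ hsin.ne'] at hcap
  rw [capSlack_eq, hcap, sub_self]

lemma IsCapBody.exists_capSlack_eq_zero (hθ : θ ∈ Ioc 0 (π / 2)) (hK : IsCapBody n θ K)
    {v z : horizontal n} (hz : z ∈ capBase K) (hv : v ≠ 0) (hvz : z - v ∈ capBase K)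
    (hmax : ∀ y ∈ K, ⟪(v : V n), y⟫ ≤ ⟪(v : V n), z⟫) :
    ∃ ζ : capCap n θ, 0 < ⟪horizProj n ζ, v⟫ ∧ capSlack θ K z ζ = 0 ∧
      0 < capSlack θ K z (capMirror v ζ) := by
  obtain ⟨a, ha, hnorm⟩ := exists_norm_smul_eq_sin hθ hv
  let ζ : capCap n θ := ⟨(a • v : horizontal n), coe_mem_capCap hnorm⟩
  have hl : 0 < ⟪horizProj n ζ, v⟫ := by
    rw [inner_horizProj, Submodule.coe_smul, real_inner_smul_left]
    exact mul_pos ha (real_inner_self_pos.mpr (Subtype.coe_ne_coe.mpr hv))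
  refine ⟨ζ, hl, hK.capSlack_coe_eq_zero hθ hnorm hz fun y hy => ?_, hl.trans_le ?_⟩
  · rw [Submodule.coe_smul, real_inner_smul_left, real_inner_smul_left]
    exact mul_le_mul_of_nonneg_left (hmax y hy) ha.le
  · have hle := inner_sub_le_capSlack hK.1 hvz z (capMirror v ζ)
    rwa [← Submodule.coe_sub, sub_sub_cancel_left, inner_add_smul_Etop, ← inner_horizProj,
      inner_neg_right, inner_horizProj_capMirror, neg_neg] at hle

/-- Reflecting in the hyperplane `vᗮ` increases the slack on the half `⟨ζ, v⟩ ≥ 0` of the cap, and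
does so strictly at the rim point in direction `v`, where the slack vanishes. -/
lemma IsCapBody.eventually_inner_moment_neg (hθ : θ ∈ Ioc 0 (π / 2)) (hK : IsCapBody n θ K)
    {f : ℝ → ℝ} (hf : ContinuousOn f (Ioi 0)) (hmono : StrictMonoOn f (Ioi 0)) {v z : horizontal n}
    (hz : z ∈ capBase K) (hv : v ≠ 0) (hvz : z - v ∈ capBase K)
    (hmax : ∀ y ∈ capBase K, ⟪v, y⟫ ≤ ⟪v, z⟫) :
    ∀ᶠ ε in 𝓝[>] 0, ⟪moment (μH[(n : ℝ)] : Measure (capCap n θ))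
      (fun ζ => suppFn n K (ζ + cos θ • Etop n)) (fun ζ => horizProj n ζ) (truncBelow f ε) z,
        v⟫ < 0 := by
  have := isOpenPosMeasure_capCap (n := n) hθ
  have hmaxK : ∀ y ∈ K, ⟪(v : V n), y⟫ ≤ ⟪(v : V n), z⟫ := fun y =>
    hK.inner_le_of_forall_mem_capBase hθ hmax
  obtain ⟨ζ₀, hζ₀, hslack, hslack'⟩ := hK.exists_capSlack_eq_zero hθ hz hv hvz hmaxK
  have hcont : Continuous (capSlack θ K z) := continuous_slack (continuous_capSupp hK.1)
    (by fun_prop) z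
  filter_upwards [Ioo_mem_nhdsGT hslack'] with ε hε
  have hcontε := (continuous_truncBelow hf hε.1).comp hcont
  rw [inner_moment (by fun_prop) hcontε]
  refine integral_mul_neg_of_involutive (τ := (capMirror v).toHomeomorph) (x₀ := ζ₀)
    ((capMirror v).measurePreserving_hausdorffMeasure _) (capMirror_involutive v)
    hcontε (by fun_prop) (inner_horizProj_capMirror v) (fun ζ hζ => ?_) hζ₀.ne' ?_
  · exact monotone_truncBelow hmono.monotoneOn hε.1
      (capSlack_le_capMirror hK.1 ⟨_, hz⟩ hmaxK hζ)
  · change truncBelow f ε (capSlack θ K z ζ₀) ≠ truncBelow f ε (capSlack θ K z (capMirror v ζ₀))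
    rw [hslack, truncBelow, max_eq_left hε.1.le, truncBelow_of_le hε.2.le]
    exact (hmono hε.1 hslack' hε.2).ne

lemma moment_eq_zero_iff (hK : IsCompact K) {f : ℝ → ℝ} (hf : ContinuousOn f (Ioi 0))
    {z : horizontal n} (hz : ∀ ζ, 0 < capSlack θ K z ζ) :
    moment (μH[(n : ℝ)] : Measure (capCap n θ)) (fun ζ => suppFn n K (ζ + cos θ • Etop n))
        (fun ζ => horizProj n ζ) f z = 0 ↔
      ∀ i : Fin (n + 1), i ≠ Fin.last n → ∫ ζ in capCap n θ,
        f (suppFn n K (ζ + cos θ • Etop n) - ⟪ζ, (z : V n)⟫) * ζ i ∂μH[(n : ℝ)] = 0 := by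
  have hcoord : ∀ x : horizontal n, x = 0 ↔ ∀ i, i ≠ Fin.last n → (x : V n) i = 0 := fun x => by
    refine ⟨fun hx i _ => by simp [hx], fun hx => Subtype.ext (PiLp.ext fun i => ?_)⟩
    rcases eq_or_ne i (Fin.last n) with rfl | hi
    exacts [mem_horizontal.mp x.2, hx i hi]
  have hcont : Continuous fun ζ => f (capSlack θ K z ζ) • horizProj n ζ :=
    (hf.comp_continuous (continuous_slack (continuous_capSupp hK) (by fun_prop) z) hz).smul
      (by fun_prop)
  rw [hcoord]
  refine forall₂_congr fun i hi => ?_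
  let L : horizontal n →L[ℝ] ℝ := (EuclideanSpace.proj i).comp (horizontal n).subtypeL
  have hproj : ∀ ζ : V n, L (horizProj n ζ) = ζ i := fun ζ => horizProj_apply_of_ne_last ζ hi
  have hL : L (∫ ζ : capCap n θ, f (capSlack θ K z ζ) • horizProj n ζ ∂μH[n]) =
      ∫ ζ : capCap n θ, f (capSlack θ K z ζ) * (ζ : V n) i ∂μH[n] := by
    rw [← L.integral_comp_comm (integrable_of_continuous hcont)]
    simp only [map_smul, smul_eq_mul, hproj]
  rw [← integral_subtype_hausdorffMeasure isCompact_capCap.measurableSet n.cast_nonneg]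
  simp only [← capSlack_eq]
  exact Eq.congr_left hL

end Body

lemma PsiOK.continuousOn_deriv {ψ : ℝ → ℝ} (hψ : PsiOK ψ) : ContinuousOn (deriv ψ) (Ioi 0) := by
  rcases hψ with rfl | ⟨p, -, rfl⟩ | rfl
  · exact ((contDiff_fun_id.pow 2).continuous_deriv le_rfl).continuousOn
  · have hpow : ContDiffOn ℝ 1 (fun x : ℝ => x ^ p) (Ioi 0) := fun x hx =>
      (contDiffAt_rpow_const_of_ne (ne_of_gt hx)).contDiffWithinAt
    exact hpow.continuousOn_deriv_of_isOpen isOpen_Ioi le_rfl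
  · have hlog : ContDiffOn ℝ 1 (fun x : ℝ => -Real.log x) (Ioi 0) := fun x hx =>
      (contDiffAt_log.mpr (ne_of_gt hx)).neg.contDiffWithinAt
    exact hlog.continuousOn_deriv_of_isOpen isOpen_Ioi le_rfl

lemma PsiOK.strictMonoOn_deriv {ψ : ℝ → ℝ} (hψ : PsiOK ψ) : StrictMonoOn (deriv ψ) (Ioi 0) := by
  rcases hψ with rfl | ⟨p, hp, rfl⟩ | rfl
  · intro x _ y _ hxy
    simpa using hxy
  · intro x hx y hy hxy
    rw [Real.deriv_rpow_const, Real.deriv_rpow_const]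
    exact mul_lt_mul_of_neg_left
      (Real.strictAntiOn_rpow_Ioi_of_exponent_neg (by linarith) hx hy hxy) hp
  · intro x hx y _ hxy
    simpa using inv_strictAnti₀ hx hxy

theorem capillary_entropy_point_general {f : ℝ → ℝ} (hf : ContinuousOn f (Ioi 0))
    (hmono : StrictMonoOn f (Ioi 0)) {n : ℕ} {θ : ℝ} (hθ : θ ∈ Ioc 0 (π / 2)) {K : Set (V n)}
    (hK : IsCapBody n θ K) :
    (∀ ζ ∈ capCap n θ, ∀ z ∈ relintBase n K,
      0 < suppFn n K (ζ + Real.cos θ • Etop n) - ⟪ζ, z⟫) ∧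
    (∃! z : V n, z ∈ relintBase n K ∧
      ∀ i : Fin (n + 1), i ≠ Fin.last n →
        ∫ ζ in capCap n θ,
          f (suppFn n K (ζ + Real.cos θ • Etop n) - ⟪ζ, z⟫) * ζ i ∂μH[(n : ℝ)] = 0) := by
  have := isOpenPosMeasure_capCap (n := n) hθ
  have hpos : ∀ z ∈ interior (capBase K), ∀ ζ, 0 < capSlack θ K z ζ := fun z hz =>
    hK.capSlack_pos hθ hz
  have hlift : ∀ z ∈ relintBase n K, ∃ z' ∈ interior (capBase K), (z' : V n) = z := fun z hz =>
    ⟨⟨z, mem_horizontal.mpr hz.1⟩, mem_interior_capBase_iff.mpr hz, rfl⟩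
  refine ⟨fun ζ hζ z hz => ?_, ?_⟩
  · obtain ⟨z, hz', rfl⟩ := hlift z hz
    exact capSlack_eq z ⟨ζ, hζ⟩ ▸ hpos z hz' ⟨ζ, hζ⟩
  · obtain ⟨z, ⟨hz, hz0⟩, huniq⟩ := existsUnique_moment_eq_zero (σ := μH[(n : ℝ)])
      (continuous_capSupp hK.1) (by fun_prop) hf hmono
      (fun _ => eq_zero_of_forall_inner_horizProj_eq_zero hθ) (isCompact_capBase hK.1)
      (convex_capBase hK.2.1) (nonempty_interior_capBase hK.2.2.2.2.2.2) hpos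
      fun z hz v hv hvz => hK.eventually_inner_moment_neg hθ hf hmono hz hv (interior_subset hvz)
    refine ⟨z, ⟨mem_interior_capBase_iff.mp hz, (moment_eq_zero_iff hK.1 hf (hpos z hz)).mp hz0⟩,
      fun w ⟨hw, hw0⟩ => ?_⟩
    obtain ⟨w, hwi, rfl⟩ := hlift w hw
    exact congrArg _ (huniq w ⟨hwi, (moment_eq_zero_iff hK.1 hf (hpos w hwi)).mpr hw0⟩)

/-- existence and uniqueness of the entropy point of a capillary
convex body. -/
theorem capillary_entropy_point (ψ : ℝ → ℝ) (hψ : PsiOK ψ) (n : ℕ) (hn : 1 ≤ n)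
    (θ : ℝ) (hθ : θ ∈ Ioc 0 (π / 2)) (K : Set (V n)) (hK : IsCapBody n θ K) :
    (∀ ζ ∈ capCap n θ, ∀ z ∈ relintBase n K,
      0 < suppFn n K (ζ + Real.cos θ • Etop n) - ⟪ζ, z⟫) ∧
    (∃! z : V n, z ∈ relintBase n K ∧
      ∀ i : Fin (n + 1), i ≠ Fin.last n →
        ∫ ζ in capCap n θ,
          deriv ψ (suppFn n K (ζ + Real.cos θ • Etop n) - ⟪ζ, z⟫) * ζ i ∂μH[(n : ℝ)] = 0) := by
  exact capillary_entropy_point_general hψ.continuousOn_deriv hψ.strictMonoOn_deriv hθ hK
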